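/- Fix reals α̂ > 0 and δ > 0. For each integer n large enough that q_n := δ·(log n)²/n ∈ (0,1), set τ_n := log(1/q_n), let λ_n ≥ 1 be reals with λ_n·(log n)/n → 0 as n → ∞, and define Δ_n := 1/(1 + (λ_n − 1)·q_n) and T_n := n·q_n·Δ_n·log(1 + τ_n/(n·α̂·q_n·Δ_n)). Then T_n·α̂/log n → 1 as n → ∞; that is, T_n is asymptotically equivalent to (log n)/α̂. -/

import Mathlib

open Filter Real

/-!
The mean number `n·q·Δ` of active links outgrows the threshold `τ ~ log n`, so the argument
`τ / (n·α̂·q·Δ)` of `log (1 + ·)` vanishes and linearising the logarithm gives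
`T ~ n·q·Δ · τ / (n·α̂·q·Δ) = τ / α̂ ~ log n / α̂`. To see `τ ≪ n·q·Δ`, clear the denominator of
`Δ`: it reads `τ + (λ - 1)·τ·q ≪ n·q`, where `τ ≪ n·q` by the choice of `q` and `λ·τ ≪ n` is the
delay condition.
-/

open Asymptotics Topology

section Logarithm

theorem isEquivalent_log_one_add : (fun x : ℝ => log (1 + x)) ~[𝓝 0] id := by
  have hderiv := hasDerivAt_iff_isLittleO_nhds_zero.1 (hasDerivAt_log one_ne_zero)
  simpa [IsEquivalent, Pi.sub_def, Function.id_def] using hderiv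

theorem isEquivalent_mul_log_one_add_div {ι : Type*} {l : Filter ι} {a b : ι → ℝ}
    (h : b =o[l] a) : (fun i => a i * log (1 + b i / a i)) ~[l] b := by
  have hlog : (fun i => log (1 + b i / a i)) ~[l] fun i => b i / a i :=
    isEquivalent_log_one_add.comp_tendsto h.tendsto_div_nhds_zero
  refine (IsEquivalent.refl.mul hlog).congr_right ?_
  filter_upwards [h.isBigO.eq_zero_imp] with i hi
  exact mul_div_cancel_of_imp' hi

theorem isLittleO_log_const_mul_log_pow {c : ℝ} (hc : c ≠ 0) (k : ℕ) :
    (fun x => log (c * log x ^ k)) =o[atTop] log := by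
  have hloglog : (fun x => log (log x)) =o[atTop] log :=
    isLittleO_log_id_atTop.comp_tendsto tendsto_log_atTop
  have hsum : (fun x => log c + k * log (log x)) =o[atTop] log :=
    isLittleO_const_log_atTop.add (hloglog.const_mul_left k)
  refine hsum.congr' ?_ .rfl
  filter_upwards [tendsto_log_atTop.eventually_ne_atTop 0] with x hx
  rw [log_mul hc (pow_ne_zero k hx), log_pow]

theorem isEquivalent_log_one_div_const_mul_log_pow_div {c : ℝ} (hc : c ≠ 0) (k : ℕ) :
    (fun x => log (1 / (c * log x ^ k / x))) ~[atTop] log := by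
  refine (IsEquivalent.refl.sub_isLittleO (isLittleO_log_const_mul_log_pow hc k)).congr_left ?_
  filter_upwards [tendsto_log_atTop.eventually_ne_atTop 0, eventually_ne_atTop 0] with x hlog hx
  rw [one_div_div, log_div hx (mul_ne_zero hc (pow_ne_zero k hlog)), Pi.sub_apply]

theorem isLittleO_log_mul_const_mul_log_pow_div {c : ℝ} (hc : c ≠ 0) {k : ℕ} (hk : 1 < k) :
    log =o[atTop] fun x => x * (c * log x ^ k / x) := by
  have hpow : log =o[atTop] fun x => c * log x ^ k := by
    have hlog := (isLittleO_pow_pow_atTop_of_lt (𝕜 := ℝ) hk).comp_tendsto tendsto_log_atTop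
    simpa [Function.comp_def] using hlog.const_mul_right hc
  refine hpow.congr' .rfl ?_
  filter_upwards [eventually_ne_atTop 0] with x hx
  rw [mul_div_cancel₀ _ hx]

end Logarithm

section Throughput

/-- The full-buffer probability `Δ` (Lemma 1) of a link that receives a packet with probability
`1 / lam` in each slot and is active with probability `q`. -/
noncomputable def fullBufferProb (lam q : ℝ) : ℝ := 1 / (1 + (lam - 1) * q)

/-- The asymptotic effective throughput `T` (Lemma 5) of `n` links with mean cross gain `ahat`,
gain threshold `τ`, activity probability `q` and full-buffer probability `Δ`. The activity
probability is not tied to `τ`, so no fading law is built in. -/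
noncomputable def effectiveThroughput (n ahat q τ Δ : ℝ) : ℝ :=
  n * q * Δ * log (1 + τ / (n * ahat * q * Δ))

variable {ι : Type*} {l : Filter ι} {N q τ Δ lam : ι → ℝ}

theorem isEquivalent_effectiveThroughput_mul {ahat : ℝ} (hahat : ahat ≠ 0)
    (h : τ =o[l] fun i => N i * q i * Δ i) :
    (fun i => effectiveThroughput (N i) ahat (q i) (τ i) (Δ i) * ahat) ~[l] τ := by
  refine (isEquivalent_mul_log_one_add_div (h.const_mul_right hahat)).congr_left (.of_eq ?_)
  funext i
  rw [effectiveThroughput, show N i * ahat * q i * Δ i = ahat * (N i * q i * Δ i) by ring]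
  ring

theorem isLittleO_mul_fullBufferProb (hq : τ =o[l] fun i => N i * q i)
    (hlam : (fun i => (lam i - 1) * τ i) =o[l] N) (hΔ : ∀ᶠ i in l, 1 + (lam i - 1) * q i ≠ 0) :
    τ =o[l] fun i => N i * q i * fullBufferProb (lam i) (q i) := by
  have hbuffer : (fun i => τ i + (lam i - 1) * τ i * q i) =o[l] fun i => N i * q i :=
    hq.add (hlam.mul_isBigO (isBigO_refl q l))
  refine (hbuffer.mul_isBigO (isBigO_refl (fun i => fullBufferProb (lam i) (q i)) l)).congr' ?_ .rfl
  filter_upwards [hΔ] with i hi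
  rw [fullBufferProb]
  field_simp

end Throughput

theorem effective_throughput_BAP_general {ahat : ℝ} (hahat : ahat ≠ 0) {q τ lam : ℕ → ℝ}
    (hτ : τ ~[atTop] fun n : ℕ => log n) (hq : (fun n : ℕ => log n) =o[atTop] fun n => n * q n)
    (hΔ : ∀ᶠ n in atTop, 1 + (lam n - 1) * q n ≠ 0)
    (hlam : Tendsto (fun n : ℕ => lam n * log n / n) atTop (𝓝 0)) :
    Tendsto (fun n : ℕ =>
      effectiveThroughput n ahat (q n) (τ n) (fullBufferProb (lam n) (q n)) * ahat / log n)
      atTop (𝓝 1) := by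
  have hlog_ne : ∀ᶠ n : ℕ in atTop, log n ≠ 0 :=
    (tendsto_log_atTop.comp tendsto_natCast_atTop_atTop).eventually_ne_atTop 0
  have hlog : (fun n : ℕ => log n) =o[atTop] fun n => (n : ℝ) :=
    isLittleO_log_id_atTop.comp_tendsto tendsto_natCast_atTop_atTop
  have hlam_log : (fun n => lam n * log n) =o[atTop] fun n : ℕ => (n : ℝ) :=
    isLittleO_of_tendsto (fun n hn => by simp [hn]) hlam
  have hlam_sub_log : (fun n => (lam n - 1) * log n) =o[atTop] fun n : ℕ => (n : ℝ) := by
    simpa only [sub_one_mul] using hlam_log.sub hlog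
  have hlamτ : (fun n => (lam n - 1) * τ n) =o[atTop] fun n : ℕ => (n : ℝ) :=
    ((isBigO_refl _ _).mul hτ.isBigO).trans_isLittleO hlam_sub_log
  have hload : τ =o[atTop] fun n : ℕ => n * q n * fullBufferProb (lam n) (q n) :=
    isLittleO_mul_fullBufferProb (hτ.trans_isLittleO hq) hlamτ hΔ
  exact (isEquivalent_iff_tendsto_one hlog_ne).1
    ((isEquivalent_effectiveThroughput_mul hahat hload).trans hτ)

/-- Theorem 2 (Bernoulli arrival process): with `q_n = δ·(log n)²/n`, `τ_n = log(1/q_n)`,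
delay bounds `λ_n ≥ 1` with `λ_n·(log n)/n → 0`, and full-buffer probability
`Δ_n = 1/(1 + (λ_n − 1)·q_n)`, the effective throughput
`T_n = n·q_n·Δ_n·log(1 + τ_n/(n·ahat·q_n·Δ_n))` satisfies `T_n·ahat/log n → 1`. -/
theorem effective_throughput_BAP (ahat δ : ℝ) (hahat : 0 < ahat) (hδ : 0 < δ)
    (lam : ℕ → ℝ) (hlam1 : ∀ n, 1 ≤ lam n)
    (hlam : Tendsto (fun n : ℕ => lam n * Real.log n / n) atTop (nhds 0)) :
    Tendsto (fun n : ℕ =>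
      let q := δ * (Real.log n) ^ 2 / n
      let τ := Real.log (1 / q)
      let Δ := 1 / (1 + (lam n - 1) * q)
      (n * q * Δ * Real.log (1 + τ / (n * ahat * q * Δ))) * ahat / Real.log n)
      atTop (nhds 1) := by
  exact effective_throughput_BAP_general hahat.ne'
    ((isEquivalent_log_one_div_const_mul_log_pow_div hδ.ne' 2).comp_tendsto
      tendsto_natCast_atTop_atTop)
    ((isLittleO_log_mul_const_mul_log_pow_div hδ.ne' one_lt_two).comp_tendsto
      tendsto_natCast_atTop_atTop)
    (.of_forall fun n => by have := sub_nonneg.2 (hlam1 n); positivity) hlam
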